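/- Backward-induction lemma (combinatorial core of Proposition 2): let d : ℕ, and for every list h of naturals with |h| < d let k(h) be a positive natural and δ(h) a nonnegative real, and assume that along every full history (r_1,…,r_d) with r_{i+1} ∈ Fin (k (r_1,…,r_i)) the sum δ(∅) + δ(r_1) + … + δ(r_1,…,r_{d-1}) is at most ε. Let S be a predicate on histories satisfying the closure property: for every history h with |h| < d, if the number of r ∈ Fin (k h) with S(h ++ [r]) is greater than δ(h)·k(h), then S(h). If each r_{i+1} is chosen uniformly at random from Fin (k (r_1,…,r_i)), independently given the past, and the probability that the full history satisfies S is greater than ε, then S holds of the empty history. -/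

import Mathlib

/-!
Regard `δ h` as the price of a step out of `h`. A path from a history outside `S` to one inside
must enter `S` at some step, and by the closure property a random step from a history `h` outside
`S` enters it with probability at most `δ h`. By a union bound along the path, the probability that
the full history satisfies `S` is at most the expected total price, unless `S` holds at the start.
The pathwise bound `ε` on the total price bounds its expectation.
-/

/-- A full history of the random process is valid if each entry was chosen among the
`k`-many options available given the preceding entries. -/
def ValidHistory (k : List ℕ → ℕ) (h : List ℕ) : Prop :=
  ∀ i < h.length, h.getD i 0 < k (h.take i)

open scoped Classical in
/-- `successProb k S d h`: the probability that, continuing from history `h` for `d`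
more uniformly random steps (the next entry being uniform on `Fin (k h')` at each
intermediate history `h'`), the resulting full history satisfies `S`. -/
noncomputable def successProb (k : List ℕ → ℕ) (S : List ℕ → Prop) :
    ℕ → List ℕ → ℝ
  | 0, h => if S h then 1 else 0
  | d + 1, h => (∑ r : Fin (k h), successProb k S d (h ++ [(r : ℕ)])) / (k h)

open scoped BigOperators

section ValidHistory

variable {k : List ℕ → ℕ}

theorem validHistory_nil : ValidHistory k [] :=
  fun _ hi => absurd hi (Nat.not_lt_zero _)

theorem ValidHistory.append_singleton {h : List ℕ} {r : ℕ} (hv : ValidHistory k h)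
    (hr : r < k h) : ValidHistory k (h ++ [r]) := by
  intro i hi
  have hi' : i ≤ h.length := Nat.lt_succ_iff.mp (by simpa using hi)
  obtain hlt | rfl := hi'.lt_or_eq
  · rw [List.getD_append _ _ _ _ hlt, List.take_append_of_le_length hlt.le]
    exact hv i hlt
  · simpa using hr

end ValidHistory

theorem sum_range_take_append_singleton {α M : Type*} [AddCommMonoid M] (f : List α → M)
    (l : List α) (a : α) :
    ∑ i ∈ Finset.range (l ++ [a]).length, f ((l ++ [a]).take i)
      = ∑ i ∈ Finset.range l.length, f (l.take i) + f l := by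
  rw [List.length_append, List.length_singleton, Finset.sum_range_succ, List.take_left]
  congr 1
  refine Finset.sum_congr rfl fun i hi => ?_
  rw [List.take_append_of_le_length (Finset.mem_range.mp hi).le]

theorem expect_ite_one_zero_eq_ncard_div_card {ι : Type*} [Fintype ι] (p : ι → Prop)
    [DecidablePred p] :
    𝔼 i, (if p i then (1 : ℝ) else 0) = ({i | p i}.ncard : ℝ) / Fintype.card ι := by
  rw [Fintype.expect_eq_sum_div_card, Finset.sum_boole, Set.ncard_eq_toFinset_card',
    Set.toFinset_ofPred]

section SuccessProb

variable (k : List ℕ → ℕ) (S : List ℕ → Prop)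

theorem successProb_succ (n : ℕ) (h : List ℕ) :
    successProb k S (n + 1) h = 𝔼 r : Fin (k h), successProb k S n (h ++ [(r : ℕ)]) := by
  rw [successProb, Fintype.expect_eq_sum_div_card, Fintype.card_fin]

theorem successProb_le_one (n : ℕ) (h : List ℕ) : successProb k S n h ≤ 1 := by
  induction n generalizing h with
  | zero =>
    rw [successProb]
    split_ifs <;> norm_num
  | succ n ih =>
    refine div_le_one_of_le₀ ?_ (Nat.cast_nonneg _)
    calc ∑ r : Fin (k h), successProb k S n (h ++ [(r : ℕ)])
        ≤ ∑ _r : Fin (k h), (1 : ℝ) := Finset.sum_le_sum fun _ _ => ih _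
      _ = k h := by simp

end SuccessProb

/-- `expectedSum k f n h` is the expected value of `f h₀ + ⋯ + f hₙ₋₁`, where `h₀ = h` and each
`hᵢ₊₁` extends `hᵢ` by a uniformly random element of `Fin (k hᵢ)`. For `f = δ`
it is the expected total threshold, the bound on the probability of reaching `S` from outside. The
history reached after the last step does not contribute. -/
noncomputable def expectedSum (k : List ℕ → ℕ) (f : List ℕ → ℝ) : ℕ → List ℕ → ℝ
  | 0, _ => 0
  | n + 1, h => f h + 𝔼 r : Fin (k h), expectedSum k f n (h ++ [(r : ℕ)])

section ExpectedSum

variable {d : ℕ} {k : List ℕ → ℕ} {δ : List ℕ → ℝ}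

theorem expectedSum_nonneg (hδ : ∀ h : List ℕ, h.length < d → 0 ≤ δ h) {n : ℕ} {h : List ℕ}
    (hn : h.length + n ≤ d) : 0 ≤ expectedSum k δ n h := by
  induction n generalizing h with
  | zero => exact le_rfl
  | succ n ih =>
    refine add_nonneg (hδ h (by lia)) (Finset.expect_nonneg fun r _ => ih ?_)
    grind

theorem sum_take_add_expectedSum_le {ε : ℝ} (hk : ∀ h : List ℕ, h.length < d → 0 < k h)
    (hsum : ∀ h : List ℕ, h.length = d → ValidHistory k h →
      ∑ i ∈ Finset.range d, δ (h.take i) ≤ ε)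
    {n : ℕ} {h : List ℕ} (hn : h.length + n = d) (hv : ValidHistory k h) :
    ∑ i ∈ Finset.range h.length, δ (h.take i) + expectedSum k δ n h ≤ ε := by
  induction n generalizing h with
  | zero =>
    obtain rfl : h.length = d := hn
    simpa [expectedSum] using hsum h rfl hv
  | succ n ih =>
    have hne : Nonempty (Fin (k h)) := Fin.pos_iff_nonempty.mp (hk h (by lia))
    have hstep (r : Fin (k h)) : expectedSum k δ n (h ++ [(r : ℕ)])
        ≤ ε - (∑ i ∈ Finset.range h.length, δ (h.take i) + δ h) := by
      rw [← sum_range_take_append_singleton δ h (r : ℕ), le_sub_iff_add_le']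
      exact ih (by grind) (hv.append_singleton r.isLt)
    have havg := Finset.expect_le Finset.univ_nonempty fun r _ => hstep r
    rw [expectedSum]
    linarith

theorem expectedSum_nil_le {ε : ℝ} (hk : ∀ h : List ℕ, h.length < d → 0 < k h)
    (hsum : ∀ h : List ℕ, h.length = d → ValidHistory k h →
      ∑ i ∈ Finset.range d, δ (h.take i) ≤ ε) :
    expectedSum k δ d [] ≤ ε := by
  simpa using sum_take_add_expectedSum_le hk hsum (h := []) (zero_add d) validHistory_nil

open scoped Classical in
theorem successProb_le_ite_add_expectedSum {S : List ℕ → Prop}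
    (hk : ∀ h : List ℕ, h.length < d → 0 < k h)
    (hδ : ∀ h : List ℕ, h.length < d → 0 ≤ δ h)
    (hclosure : ∀ h : List ℕ, h.length < d →
      δ h * k h < ({r : Fin (k h) | S (h ++ [(r : ℕ)])}.ncard : ℝ) → S h)
    {n : ℕ} {h : List ℕ} (hn : h.length + n ≤ d) :
    successProb k S n h ≤ (if S h then 1 else 0) + expectedSum k δ n h := by
  induction n generalizing h with
  | zero => simp [successProb, expectedSum]
  | succ n ih =>
    have hlen : h.length < d := by lia
    by_cases hS : S h
    · rw [if_pos hS]
      exact (successProb_le_one k S (n + 1) h).trans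
        (le_add_of_nonneg_right (expectedSum_nonneg hδ hn))
    · have henter : 𝔼 r : Fin (k h), (if S (h ++ [(r : ℕ)]) then (1 : ℝ) else 0) ≤ δ h := by
        rw [expect_ite_one_zero_eq_ncard_div_card, Fintype.card_fin,
          div_le_iff₀ (Nat.cast_pos.mpr (hk h hlen))]
        exact not_lt.mp (mt (hclosure h hlen) hS)
      rw [if_neg hS, zero_add]
      calc successProb k S (n + 1) h
          = 𝔼 r : Fin (k h), successProb k S n (h ++ [(r : ℕ)]) := successProb_succ k S n h
        _ ≤ 𝔼 r : Fin (k h), ((if S (h ++ [(r : ℕ)]) then 1 else 0)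
              + expectedSum k δ n (h ++ [(r : ℕ)])) :=
            Finset.expect_le_expect fun r _ => ih (by grind)
        _ = 𝔼 r : Fin (k h), (if S (h ++ [(r : ℕ)]) then 1 else 0)
              + 𝔼 r : Fin (k h), expectedSum k δ n (h ++ [(r : ℕ)]) :=
            Finset.expect_add_distrib ..
        _ ≤ δ h + 𝔼 r : Fin (k h), expectedSum k δ n (h ++ [(r : ℕ)]) := by gcongr
        _ = expectedSum k δ (n + 1) h := rfl

end ExpectedSum

theorem backward_induction_conservation_general {d : ℕ} {k : List ℕ → ℕ} {δ : List ℕ → ℝ}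
    {S : List ℕ → Prop}
    (hk : ∀ h : List ℕ, h.length < d → 0 < k h)
    (hδ : ∀ h : List ℕ, h.length < d → 0 ≤ δ h)
    (hclosure : ∀ h : List ℕ, h.length < d →
      δ h * k h < ({r : Fin (k h) | S (h ++ [(r : ℕ)])}.ncard : ℝ) → S h)
    (hprob : expectedSum k δ d [] < successProb k S d []) :
    S [] := by
  by_contra hS
  have hle := successProb_le_ite_add_expectedSum hk hδ hclosure (h := []) (zero_add d).le
  rw [if_neg hS, zero_add] at hle
  exact hle.not_gt hprob

/-- backward-induction lemma: suppose along every valid full history the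
thresholds `δ` sum to at most `ε`, and `S` has the closure property: whenever more than
a `δ h` fraction of the options `r` at a history `h` lead to a history satisfying `S`,
then `S h` holds. If the probability that a random full history satisfies `S` exceeds
`ε`, then `S` holds at the empty history. -/
theorem backward_induction_conservation (d : ℕ) (k : List ℕ → ℕ) (δ : List ℕ → ℝ) (ε : ℝ)
    (S : List ℕ → Prop)
    (hk : ∀ h : List ℕ, h.length < d → 0 < k h)
    (hδ : ∀ h : List ℕ, h.length < d → 0 ≤ δ h)
    (hsum : ∀ h : List ℕ, h.length = d → ValidHistory k h →
      ∑ i ∈ Finset.range d, δ (h.take i) ≤ ε)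
    (hclosure : ∀ h : List ℕ, h.length < d →
      δ h * k h < ({r : Fin (k h) | S (h ++ [(r : ℕ)])}.ncard : ℝ) → S h)
    (hprob : ε < successProb k S d []) :
    S [] :=
  backward_induction_conservation_general hk hδ hclosure
    ((expectedSum_nil_le hk hsum).trans_lt hprob)
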